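/- Let a be a k×k Hermitian matrix with normalized trace τ(a) and variance σ(a)² = τ(a²) − τ(a)², and suppose L⁻·I ≤ a ≤ L⁺·I. For t ∈ (0,1], if every eigenvalue of a has multiplicity at most k(1−t), then t·[x] ≤ max{|tL⁺ + 2σ(a)√(t(1−t)) + (1−t)τ(a)|, |tL⁻ − 2σ(a)√(t(1−t)) + (1−t)τ(a)|} for every x in the support of μ_a^{⊞1/t}, where [x] denotes |x|; i.e., ‖a‖_(t) is bounded by this maximum. -/

import Mathlib

open MeasureTheory
open scoped ENNReal

/-- The Cauchy transform `G_μ(z) = ∫ 1/(z−ξ) dμ(ξ)` of a measure on `ℝ`. -/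
noncomputable def cauchyTransform (μ : Measure ℝ) (z : ℂ) : ℂ :=
  ∫ ξ, (z - (ξ : ℂ))⁻¹ ∂μ

/-- The reciprocal Cauchy transform `F_μ = 1/G_μ`. -/
noncomputable def recipCauchy (μ : Measure ℝ) (z : ℂ) : ℂ :=
  (cauchyTransform μ z)⁻¹

/-- `ν = μ^{⊞T}` in the sense of Belinschi–Bercovici subordination: there is an
analytic self-map `ω` of the upper half-plane with `F_ν = F_μ ∘ ω` and
`ω(z) = z/T + ((T−1)/T) F_ν(z)`. -/
def IsFreeConvPow (μ ν : Measure ℝ) (T : ℝ) : Prop :=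
  ∃ ω : ℂ → ℂ, AnalyticOn ℂ ω {z | 0 < z.im} ∧
    (∀ z : ℂ, 0 < z.im → 0 < (ω z).im) ∧
    (∀ z : ℂ, 0 < z.im → recipCauchy ν z = recipCauchy μ (ω z)) ∧
    (∀ z : ℂ, 0 < z.im → ω z = z / T + ((T - 1) / T) * recipCauchy ν z)

/-- The topological support of a measure on `ℝ`. -/
def measSupport (ν : Measure ℝ) : Set ℝ :=
  {x : ℝ | ∀ ε : ℝ, 0 < ε → 0 < ν (Set.Ioo (x - ε) (x + ε))}

theorem core_sum {k : ℕ} (s : Fin k → ℝ) (h : Fin k → ℂ) (w κ : ℂ) (τ : ℝ)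
    (heq : ∀ i, (w - s i) * h i = s i - τ + κ) (hh : ∑ i, h i = 0)
    (hs : ∑ i, s i = k * τ) :
    k * κ.im = w.im * ∑ i, Complex.normSq (h i) ∧
    (k * κ.re) ^ 2 ≤ (∑ i, (s i - τ) ^ 2) * ∑ i, Complex.normSq (h i) ∧
    (∑ i, (w.re - s i) * Complex.normSq (h i)) ^ 2
      ≤ (∑ i, (s i - τ) ^ 2) * ∑ i, Complex.normSq (h i) := by
  have hre : ∑ i, (h i).re = 0 := by rw [← Complex.re_sum, hh]; rfl
  have him : ∑ i, (h i).im = 0 := by rw [← Complex.im_sum, hh]; rfl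
  have e1 : ∀ i, (w.re - s i) * (h i).re - w.im * (h i).im = s i - τ + κ.re := by
    intro i
    have := congrArg Complex.re (heq i)
    simpa using this
  have e2 : ∀ i, (w.re - s i) * (h i).im + w.im * (h i).re = κ.im := by
    intro i
    have := congrArg Complex.im (heq i)
    simpa using this
  have hc : ∑ i : Fin k, (s i - τ) = 0 := by
    simp [Finset.sum_sub_distrib, hs]
  have k1 : k * κ.re = -∑ i, (s i - τ) * (h i).re := by
    have : ∑ i : Fin k, κ.re = ∑ i, (-((s i - τ) * (h i).re) + (w.re - τ) * (h i).re
        - w.im * (h i).im - (s i - τ)) :=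
      Finset.sum_congr rfl fun i _ => by linear_combination -e1 i
    rw [Finset.sum_sub_distrib, Finset.sum_sub_distrib, Finset.sum_add_distrib,
      Finset.sum_neg_distrib, ← Finset.mul_sum, ← Finset.mul_sum, hre, him, hc] at this
    simpa using this
  have k2 : k * κ.im = -∑ i, (s i - τ) * (h i).im := by
    have : ∑ i : Fin k, κ.im = ∑ i, (-((s i - τ) * (h i).im) + (w.re - τ) * (h i).im
        + w.im * (h i).re) :=
      Finset.sum_congr rfl fun i _ => by linear_combination -e2 i
    rw [Finset.sum_add_distrib, Finset.sum_add_distrib,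
      Finset.sum_neg_distrib, ← Finset.mul_sum, ← Finset.mul_sum, hre, him] at this
    simpa using this
  have k3 : w.im * ∑ i, Complex.normSq (h i) = -∑ i, (s i - τ) * (h i).im := by
    have : ∑ i, w.im * Complex.normSq (h i) = ∑ i, (-((s i - τ) * (h i).im) - κ.re * (h i).im
        + κ.im * (h i).re) :=
      Finset.sum_congr rfl fun i _ => by
        rw [Complex.normSq_apply]
        linear_combination (h i).re * e2 i - (h i).im * e1 i
    rw [Finset.sum_add_distrib, Finset.sum_sub_distrib,
      Finset.sum_neg_distrib, ← Finset.mul_sum, ← Finset.mul_sum, ← Finset.mul_sum, hre, him] at this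
    simpa using this
  have k4 : ∑ i, (w.re - s i) * Complex.normSq (h i) = ∑ i, (s i - τ) * (h i).re := by
    have : ∑ i, (w.re - s i) * Complex.normSq (h i) = ∑ i, ((s i - τ) * (h i).re
        + κ.re * (h i).re + κ.im * (h i).im) :=
      Finset.sum_congr rfl fun i _ => by
        rw [Complex.normSq_apply]
        linear_combination (h i).re * e1 i + (h i).im * e2 i
    rw [Finset.sum_add_distrib, Finset.sum_add_distrib,
      ← Finset.mul_sum, ← Finset.mul_sum, hre, him] at this
    simpa using this
  have cs : (∑ i, (s i - τ) * (h i).re) ^ 2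
      ≤ (∑ i, (s i - τ) ^ 2) * ∑ i, Complex.normSq (h i) := by
    refine (Finset.sum_mul_sq_le_sq_mul_sq _ _ _).trans ?_
    refine mul_le_mul_of_nonneg_left ?_ (Finset.sum_nonneg fun i _ => sq_nonneg _)
    refine Finset.sum_le_sum fun i _ => ?_
    rw [Complex.normSq_apply]
    nlinarith [mul_self_nonneg (h i).im]
  refine ⟨by rw [k2, k3], by rw [k1, neg_sq]; exact cs, by rw [k4]; exact cs⟩

theorem core_bound {k : ℕ} (hk : 0 < k) (s : Fin k → ℝ) (h : Fin k → ℂ) (w z κ : ℂ)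
    (τ β σ Lp η : ℝ)
    (heq : ∀ i, (w - s i) * h i = s i - τ + κ) (hh : ∑ i, h i = 0)
    (hs : ∑ i, s i = k * τ) (hβ : 0 ≤ β) (hσ : 0 ≤ σ)
    (hV : ∑ i, (s i - τ) ^ 2 = k * σ ^ 2)
    (hz : z = w + β * τ - β * κ) (hzi : 0 < z.im) (hwi : 0 < w.im) (hL : ∀ i, s i ≤ Lp)
    (hη : 0 < η) (hzr : Lp + 2 * (σ * √β) + β * τ + η ≤ z.re) :
    Lp + σ * √β + η ≤ w.re ∧
      w.im * (1 - (σ * √β) ^ 2 / (σ * √β + η) ^ 2) ≤ z.im := by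
  obtain ⟨c1, c2, c3⟩ := core_sum s h w κ τ heq hh hs
  have hk' : (0 : ℝ) < k := by exact_mod_cast hk
  set N := ∑ i, Complex.normSq (h i) with hN
  have hN0 : 0 ≤ N := Finset.sum_nonneg fun i _ => Complex.normSq_nonneg _
  obtain ⟨Q, hQ⟩ : ∃ Q, N = k * Q := ⟨N / k, by field_simp⟩
  have hQ0 : 0 ≤ Q := by
    rw [hQ] at hN0
    exact nonneg_of_mul_nonneg_right hN0 hk'
  rw [hV, hQ] at c2 c3
  rw [hQ] at c1
  have c1' : κ.im = w.im * Q := by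
    have : (k : ℝ) * κ.im = k * (w.im * Q) := by linarith
    exact mul_left_cancel₀ hk'.ne' this
  have c2' : κ.re ^ 2 ≤ σ ^ 2 * Q := by
    have : (k : ℝ) ^ 2 * κ.re ^ 2 ≤ k ^ 2 * (σ ^ 2 * Q) := by nlinarith
    exact le_of_mul_le_mul_left this (by positivity)
  have him : z.im = w.im * (1 - β * Q) := by
    rw [hz]; simp [c1']; ring
  have hbQ : β * Q < 1 := by
    rw [him] at hzi
    have := pos_of_mul_pos_right hzi hwi.le
    linarith
  have hsb : √β ^ 2 = β := Real.sq_sqrt hβ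
  set b := √β with hb
  have hb0 : 0 ≤ b := Real.sqrt_nonneg _
  have hre : z.re = w.re + β * τ - β * κ.re := by
    rw [hz]; simp
  have hkap : -(β * κ.re) ≤ σ * b := by
    refine (abs_le_of_sq_le_sq' ?_ (by positivity : 0 ≤ σ * b)).2
    have : β * (β * κ.re ^ 2) ≤ β * (σ ^ 2 * 1) := by
      refine mul_le_mul_of_nonneg_left ?_ hβ
      nlinarith [mul_le_mul_of_nonneg_left c2' hβ, sq_nonneg σ]
    calc (-(β * κ.re)) ^ 2 = β * (β * κ.re ^ 2) := by ring
      _ ≤ β * (σ ^ 2 * 1) := this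
      _ = (σ * b) ^ 2 := by rw [mul_pow, hsb]; ring
  have hw : Lp + σ * b + η ≤ w.re := by linarith
  refine ⟨hw, ?_⟩
  have hd : 0 < σ * b + η := by positivity
  set d := σ * b + η with hdd
  have hdN : d * (k * Q) ≤ ∑ i, (w.re - s i) * Complex.normSq (h i) := by
    rw [← hQ, hN, Finset.mul_sum]
    refine Finset.sum_le_sum fun i _ => ?_
    refine mul_le_mul_of_nonneg_right ?_ (Complex.normSq_nonneg _)
    linarith [hL i]
  have h4 : (d * (k * Q)) ^ 2 ≤ k * σ ^ 2 * (k * Q) :=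
    (pow_le_pow_left₀ (by positivity) hdN 2).trans c3
  have h5 : d ^ 2 * Q ≤ σ ^ 2 := by
    rcases hQ0.eq_or_lt with h0 | h0
    · rw [← h0]; simp; positivity
    · have : (k ^ 2 * Q) * (d ^ 2 * Q) ≤ (k ^ 2 * Q) * σ ^ 2 := by nlinarith
      exact le_of_mul_le_mul_left this (by positivity)
  have h6 : β * Q ≤ (σ * b) ^ 2 / d ^ 2 := by
    rw [le_div_iff₀ (by positivity), mul_pow, hsb]
    nlinarith [mul_le_mul_of_nonneg_left h5 hβ]
  rw [him]
  exact mul_le_mul_of_nonneg_left (by linarith) hwi.le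

theorem ct_im (ν : Measure ℝ) [IsFiniteMeasure ν] (z : ℂ) (hz : 0 < z.im) :
    Integrable (fun ξ : ℝ => z.im / Complex.normSq (z - ξ)) ν ∧
    -(cauchyTransform ν z).im = ∫ ξ, z.im / Complex.normSq (z - ξ) ∂ν := by
  have hne : ∀ ξ : ℝ, z - (ξ : ℂ) ≠ 0 := fun ξ h => by
    have := congrArg Complex.im h
    simp at this
    exact hz.ne' this
  have hint : Integrable (fun ξ : ℝ => (z - (ξ : ℂ))⁻¹) ν := by
    refine Integrable.of_bound (C := z.im⁻¹) ?_ ?_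
    · have : Continuous (fun ξ : ℝ => (z - (ξ : ℂ))⁻¹) :=
        Continuous.inv₀ (by fun_prop) hne
      exact this.aestronglyMeasurable
    · refine Filter.Eventually.of_forall fun ξ => ?_
      rw [norm_inv]
      refine inv_anti₀ hz ?_
      have := Complex.abs_im_le_norm (z - ξ)
      simp at this
      exact (le_abs_self _).trans this
  have him : ∀ ξ : ℝ, -((z - (ξ : ℂ))⁻¹).im = z.im / Complex.normSq (z - ξ) := by
    intro ξ
    rw [Complex.inv_im]; simp [neg_div]
  have h1 := Complex.imCLM.integral_comp_comm hint
  have h2 : Integrable (fun ξ : ℝ => ((z - (ξ : ℂ))⁻¹).im) ν := Complex.imCLM.integrable_comp hint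
  refine ⟨?_, ?_⟩
  · refine h2.neg.congr (Filter.Eventually.of_forall fun ξ => ?_)
    exact him ξ
  · rw [cauchyTransform]
    simp only [Complex.imCLM_apply] at h1
    rw [← h1, ← integral_neg]
    simp only [him]

theorem ioc_bound (ν : Measure ℝ) [IsFiniteMeasure ν] (C p q : ℝ) (hpq : p < q)
    (hC : ∀ y : ℝ, 0 < y → -(cauchyTransform ν ⟨(p + q) / 2, y⟩).im ≤ C * y) :
    ν.real (Set.Ioc p q) ≤ C / 2 * (q - p) ^ 2 := by
  set y := (q - p) / 2 with hy
  have hy0 : 0 < y := by rw [hy]; linarith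
  obtain ⟨hi, he⟩ := ct_im ν ⟨(p + q) / 2, y⟩ hy0
  have h1 := hC y hy0
  rw [he] at h1
  have h2 : ν.real (Set.Ioc p q) * (1 / (2 * y)) ≤ C * y := by
    refine le_trans ?_ h1
    have : ν.real (Set.Ioc p q) * (1 / (2 * y))
        = ∫ ξ, (Set.Ioc p q).indicator (fun _ => 1 / (2 * y)) ξ ∂ν := by
      rw [integral_indicator_const _ measurableSet_Ioc, smul_eq_mul]
    rw [this]
    refine integral_mono ((integrable_const _).indicator measurableSet_Ioc) hi fun ξ => ?_
    have hn : Complex.normSq ((⟨(p + q) / 2, y⟩ : ℂ) - ξ) = ((p + q) / 2 - ξ) ^ 2 + y ^ 2 := by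
      rw [Complex.normSq_apply]; simp; ring
    simp only [hn]
    by_cases hx : ξ ∈ Set.Ioc p q
    · rw [Set.indicator_of_mem hx, div_le_div_iff₀ (by positivity) (by positivity)]
      have h3 := hx.1
      have h4 := hx.2
      have : ((p + q) / 2 - ξ) ^ 2 ≤ y ^ 2 := by
        apply sq_le_sq'
        · rw [hy]; linarith
        · rw [hy]; linarith
      nlinarith
    · rw [Set.indicator_of_notMem hx]; positivity
  rw [mul_one_div, div_le_iff₀ (by positivity)] at h2
  calc _ ≤ _ := h2
    _ = _ := by rw [hy]; ring

theorem ioc_zero (ν : Measure ℝ) [IsFiniteMeasure ν] (C a b : ℝ) (hab : a < b)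
    (hC : ∀ x ∈ Set.Icc a b, ∀ y : ℝ, 0 < y → -(cauchyTransform ν ⟨x, y⟩).im ≤ C * y) :
    ν (Set.Ioc a b) = 0 := by
  have key : ∀ n : ℕ, ∀ p q : ℝ, a ≤ p → p < q → q ≤ b →
      ν.real (Set.Ioc p q) ≤ C / 2 * (q - p) ^ 2 * (1 / 2) ^ n := by
    intro n
    induction n with
    | zero =>
      intro p q h1 h2 h3
      simp only [pow_zero, mul_one]
      exact ioc_bound ν C p q h2 (hC _ ⟨by linarith, by linarith⟩)
    | succ n ih =>
      intro p q h1 h2 h3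
      have i1 := ih p ((p + q) / 2) h1 (by linarith) (by linarith)
      have i2 := ih ((p + q) / 2) q (by linarith) (by linarith) h3
      have hu : Set.Ioc p q = Set.Ioc p ((p + q) / 2) ∪ Set.Ioc ((p + q) / 2) q :=
        (Set.Ioc_union_Ioc_eq_Ioc (by linarith) (by linarith)).symm
      rw [hu]
      refine (measureReal_union_le _ _).trans ((add_le_add i1 i2).trans (le_of_eq ?_))
      rw [pow_succ]; ring
  have h0 : ν.real (Set.Ioc a b) ≤ 0 := by
    have hl : Filter.Tendsto (fun n : ℕ => C / 2 * (b - a) ^ 2 * (1 / 2 : ℝ) ^ n) Filter.atTop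
        (nhds (C / 2 * (b - a) ^ 2 * 0)) :=
      (tendsto_pow_atTop_nhds_zero_of_lt_one (by norm_num) (by norm_num)).const_mul _
    rw [mul_zero] at hl
    exact ge_of_tendsto' hl fun n => key n a b le_rfl hab le_rfl
  have h1 : ν.real (Set.Ioc a b) = 0 := le_antisymm h0 measureReal_nonneg
  exact (measureReal_eq_zero_iff (by finiteness)).1 h1

theorem ct_emp {k : ℕ} (s : Fin k → ℝ) (w : ℂ) (hw : 0 < w.im) :
    cauchyTransform ((k : ℝ≥0∞)⁻¹ • ∑ i : Fin k, Measure.dirac (s i)) w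
      = (k : ℂ)⁻¹ * ∑ i, (w - s i)⁻¹ := by
  rw [cauchyTransform, integral_smul_measure, integral_finsetSum_measure]
  · simp
  · intro i _
    exact integrable_dirac (by simp)

theorem emp_h {k : ℕ} (hk : 0 < k) (s : Fin k → ℝ) (w F : ℂ) (hw : 0 < w.im) (τ : ℝ)
    (hF : F = ((k : ℂ)⁻¹ * ∑ i, (w - s i)⁻¹)⁻¹) :
    ∃ h : Fin k → ℂ, (∀ i, (w - s i) * h i = s i - τ + (F - w + τ)) ∧ ∑ i, h i = 0 := by
  have hkc : (k : ℂ) ≠ 0 := by exact_mod_cast hk.ne'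
  have hne : ∀ ξ : ℝ, w - (ξ : ℂ) ≠ 0 := fun ξ h => by
    have := congrArg Complex.im h
    simp at this
    exact hw.ne' this
  have hS : ∑ i, (w - (s i : ℂ))⁻¹ ≠ 0 := by
    intro h0
    have h1 := congrArg Complex.im h0
    rw [Complex.im_sum] at h1
    have : Nonempty (Fin k) := ⟨⟨0, hk⟩⟩
    have h2 : ∑ i, ((w - (s i : ℂ))⁻¹).im < 0 := by
      refine Finset.sum_neg (fun i _ => ?_) Finset.univ_nonempty
      rw [Complex.inv_im]
      refine div_neg_of_neg_of_pos ?_ (Complex.normSq_pos.2 (hne _))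
      simpa using hw
    rw [h1] at h2
    simp at h2
  refine ⟨fun i => (F - w + s i) * (w - s i)⁻¹, fun i => ?_, ?_⟩
  · have := hne (s i)
    field_simp
    ring
  · have : ∀ i, (F - w + s i) * (w - (s i : ℂ))⁻¹ = F * (w - (s i : ℂ))⁻¹ - 1 := by
      intro i
      have := hne (s i)
      field_simp
      ring
    simp only [this]
    rw [Finset.sum_sub_distrib, ← Finset.mul_sum, hF, mul_inv, inv_inv, mul_assoc, inv_mul_cancel₀ hS]
    simp

theorem emp_im {k : ℕ} (hk : 0 < k) (s : Fin k → ℝ) (w : ℂ) (hw : 0 < w.im) (d : ℝ) (hd : 0 < d)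
    (hs : ∀ i, d ^ 2 ≤ (w.re - s i) ^ 2) :
    -((k : ℂ)⁻¹ * ∑ i, (w - s i)⁻¹).im ≤ w.im / d ^ 2 := by
  have hk' : (0 : ℝ) < k := by exact_mod_cast hk
  have e : ((k : ℂ)⁻¹ * ∑ i, (w - (s i : ℂ))⁻¹).im
      = (k : ℝ)⁻¹ * ∑ i, ((w - (s i : ℂ))⁻¹).im := by
    rw [← Complex.im_sum, ← Complex.im_ofReal_mul]
    push_cast
    rfl
  rw [e, ← mul_neg, ← Finset.sum_neg_distrib, inv_mul_le_iff₀ hk']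
  have : ∀ i ∈ Finset.univ, -((w - (s i : ℂ))⁻¹).im ≤ w.im / d ^ 2 := by
    intro i _
    rw [Complex.inv_im]
    simp only [neg_div, neg_neg, Complex.sub_im, Complex.ofReal_im, sub_zero]
    refine div_le_div_of_nonneg_left hw.le (by positivity) ?_
    rw [Complex.normSq_apply]
    simp
    nlinarith [hs i, mul_self_nonneg w.im]
  have h2 := Finset.sum_le_card_nsmul _ _ _ this
  simpa using h2

/-- Theorem 2.7(1) of the paper: for a Hermitian `a` with `L⁻ ≤ a ≤ L⁺`, if every
eigenvalue of `a` has multiplicity at most `k(1−t)`, then every point `x` of the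
support of `μ_a^{⊞1/t}` satisfies
`t|x| ≤ max{|tL⁺ + 2σ(a)√(t(1−t)) + (1−t)τ(a)|, |tL⁻ − 2σ(a)√(t(1−t)) + (1−t)τ(a)|}`;
that is, `‖a‖_(t)` is bounded by this maximum. -/
theorem stmt_10 (k : ℕ) (hk : 0 < k) (a : Matrix (Fin k) (Fin k) ℂ)
    (ha : a.IsHermitian) (Lm Lp t : ℝ)
    (hbd : ∀ i, Lm ≤ ha.eigenvalues i ∧ ha.eigenvalues i ≤ Lp)
    (ht : 0 < t) (ht1 : t ≤ 1)
    (hmult : ∀ ξ : ℝ,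
      ((Finset.univ.filter fun j => ha.eigenvalues j = ξ).card : ℝ) ≤ k * (1 - t))
    (μ ν : Measure ℝ) [IsProbabilityMeasure ν]
    (hμ : μ = (k : ℝ≥0∞)⁻¹ • ∑ i : Fin k, Measure.dirac (ha.eigenvalues i))
    (hν : IsFreeConvPow μ ν (1 / t)) :
    ∀ x ∈ measSupport ν,
      t * |x| ≤
        max |t * Lp + 2 * Real.sqrt (((k : ℝ)⁻¹ * ∑ i, (ha.eigenvalues i) ^ 2
                - ((k : ℝ)⁻¹ * ∑ i, ha.eigenvalues i) ^ 2)) * Real.sqrt (t * (1 - t))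
              + (1 - t) * ((k : ℝ)⁻¹ * ∑ i, ha.eigenvalues i)|
            |t * Lm - 2 * Real.sqrt (((k : ℝ)⁻¹ * ∑ i, (ha.eigenvalues i) ^ 2
                - ((k : ℝ)⁻¹ * ∑ i, ha.eigenvalues i) ^ 2)) * Real.sqrt (t * (1 - t))
              + (1 - t) * ((k : ℝ)⁻¹ * ∑ i, ha.eigenvalues i)| := by
  have hk' : (0 : ℝ) < k := by exact_mod_cast hk
  set s := ha.eigenvalues with hsdef
  clear_value s
  set τ := (k : ℝ)⁻¹ * ∑ i, s i with hτ
  have hsum : ∑ i, s i = k * τ := by rw [hτ]; field_simp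
  have hvar : ∑ i, (s i - τ) ^ 2 = k * ((k : ℝ)⁻¹ * ∑ i, s i ^ 2 - τ ^ 2) := by
    have : ∀ i, (s i - τ) ^ 2 = s i ^ 2 - 2 * τ * s i + τ ^ 2 := fun i => by ring
    simp only [this]
    rw [Finset.sum_add_distrib, Finset.sum_sub_distrib, ← Finset.mul_sum, hsum]
    simp
    field_simp
    ring
  clear_value τ
  set v2 := (k : ℝ)⁻¹ * ∑ i, s i ^ 2 - τ ^ 2 with hv2
  have hv0 : 0 ≤ v2 := by
    have : 0 ≤ k * v2 := hvar ▸ Finset.sum_nonneg fun i _ => sq_nonneg _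
    exact nonneg_of_mul_nonneg_right this hk'
  have hV : ∑ i, (s i - τ) ^ 2 = k * √v2 ^ 2 := by rw [Real.sq_sqrt hv0]; exact hvar
  set σ := √v2 with hσ
  have hσ0 : 0 ≤ σ := Real.sqrt_nonneg _
  clear_value σ
  set β := (1 - t) / t with hβ
  have hβ0 : 0 ≤ β := div_nonneg (by linarith) ht.le
  have htb : t * √β = √(t * (1 - t)) := by
    rw [show t * (1 - t) = t ^ 2 * β by rw [hβ]; field_simp,
      Real.sqrt_mul (sq_nonneg t), Real.sqrt_sq ht.le]
  have htβ : t * β = 1 - t := by rw [hβ]; field_simp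
  obtain ⟨ω, -, hω, hF, hωz⟩ := hν
  -- pointwise data
  have data : ∀ z : ℂ, 0 < z.im → ∃ κ : ℂ, ∃ h : Fin k → ℂ,
      (∀ i, (ω z - s i) * h i = s i - τ + κ) ∧ ∑ i, h i = 0 ∧ z = ω z + β * τ - β * κ ∧
      cauchyTransform ν z = (k : ℂ)⁻¹ * ∑ i, (ω z - s i)⁻¹ := by
    intro z hz
    have hw := hω z hz
    have hG : cauchyTransform ν z = (k : ℂ)⁻¹ * ∑ i, (ω z - s i)⁻¹ := by
      have := hF z hz
      rw [recipCauchy, recipCauchy, inv_inj, hμ, ct_emp s _ hw] at this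
      exact this
    obtain ⟨h, h1, h2⟩ := emp_h hk s (ω z) (recipCauchy ν z) hw τ (by rw [recipCauchy, hG])
    refine ⟨_, h, h1, h2, ?_, hG⟩
    have h3 := hωz z hz
    have htc : (t : ℂ) ≠ 0 := by exact_mod_cast ht.ne'
    have hbc : (β : ℂ) = (1 - t) / t := by rw [hβ]; push_cast; rfl
    rw [hbc]
    have h4 : ω z = t * z + (1 - t) * recipCauchy ν z := by
      rw [h3]; push_cast; field_simp
    field_simp
    linear_combination (-1 : ℂ) * h4
  set r := σ * √β with hr
  have hr0 : 0 ≤ r := by positivity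
  have hpos : ∀ η : ℝ, 0 < η → 0 < 1 - r ^ 2 / (r + η) ^ 2 := by
    intro η hη
    rw [sub_pos, div_lt_one (by positivity)]
    nlinarith
  have up : ∀ η : ℝ, 0 < η → ∀ z : ℂ, 0 < z.im → Lp + 2 * r + β * τ + η ≤ z.re →
      -(cauchyTransform ν z).im ≤ ((1 - r ^ 2 / (r + η) ^ 2) * η ^ 2)⁻¹ * z.im := by
    intro η hη z hz hzr
    obtain ⟨κ, h, h1, h2, h3, hG⟩ := data z hz
    obtain ⟨b1, b2⟩ := core_bound hk s h (ω z) z κ τ β σ Lp η h1 h2 hsum hβ0 hσ0 hV h3 hz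
      (hω z hz) (fun i => (hbd i).2) hη hzr
    rw [hG]
    refine (emp_im hk s (ω z) (hω z hz) η hη fun i => ?_).trans ?_
    · exact pow_le_pow_left₀ hη.le (by linarith [(hbd i).2]) 2
    · have := hpos η hη
      rw [div_le_iff₀ (by positivity), inv_mul_eq_div, div_mul_eq_mul_div, le_div_iff₀ (by positivity)]
      nlinarith [mul_le_mul_of_nonneg_right b2 (sq_nonneg η)]
  have low : ∀ η : ℝ, 0 < η → ∀ z : ℂ, 0 < z.im → z.re ≤ Lm - 2 * r + β * τ - η →
      -(cauchyTransform ν z).im ≤ ((1 - r ^ 2 / (r + η) ^ 2) * η ^ 2)⁻¹ * z.im := by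
    intro η hη z hz hzr
    obtain ⟨κ, h, h1, h2, h3, hG⟩ := data z hz
    obtain ⟨b1, b2⟩ := core_bound hk (fun i => - s i) (fun i => starRingEnd ℂ (h i))
      (-starRingEnd ℂ (ω z)) (-starRingEnd ℂ z) (-starRingEnd ℂ κ) (-τ) β σ (-Lm) η
      (fun i => by
        have := congrArg (starRingEnd ℂ) (h1 i)
        simp only [map_mul, map_sub, map_add, Complex.conj_ofReal] at this
        push_cast
        linear_combination -this)
      (by rw [← map_sum, h2, map_zero])
      (by rw [Finset.sum_neg_distrib, hsum]; ring) hβ0 hσ0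
      (by rw [← hV]; exact Finset.sum_congr rfl fun i _ => by ring)
      (by
        have := congrArg (starRingEnd ℂ) h3
        simp only [map_mul, map_sub, map_add, Complex.conj_ofReal] at this
        push_cast
        linear_combination -this)
      (by simpa using hz)
      (by simpa using hω z hz) (fun i => by linarith [(hbd i).1]) hη (by
        simp only [Complex.neg_re, Complex.conj_re]; linarith)
    simp only [Complex.neg_re, Complex.conj_re, Complex.neg_im, Complex.conj_im, neg_neg] at b1 b2
    rw [hG]
    refine (emp_im hk s (ω z) (hω z hz) η hη fun i => ?_).trans ?_
    · rw [← neg_sq ((ω z).re - s i)]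
      exact pow_le_pow_left₀ hη.le (by linarith [(hbd i).1]) 2
    · have := hpos η hη
      rw [div_le_iff₀ (by positivity), inv_mul_eq_div, div_mul_eq_mul_div, le_div_iff₀ (by positivity)]
      nlinarith [mul_le_mul_of_nonneg_right b2 (sq_nonneg η)]
  intro x hx
  have hxu : x ≤ Lp + 2 * r + β * τ := by
    by_contra hcon
    push Not at hcon
    obtain ⟨η, hη⟩ : ∃ η, η = (x - (Lp + 2 * r + β * τ)) / 2 := ⟨_, rfl⟩
    have hη0 : 0 < η := by rw [hη]; linarith
    have h0 := ioc_zero ν _ (x - η) (x + η) (by linarith) (fun y hy e he =>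
      up η hη0 ⟨y, e⟩ he (by have := hy.1; simp only; linarith))
    have h1 := hx η hη0
    exact h1.ne' (measure_mono_null Set.Ioo_subset_Ioc_self h0)
  have hxl : Lm - 2 * r + β * τ ≤ x := by
    by_contra hcon
    push Not at hcon
    obtain ⟨η, hη⟩ : ∃ η, η = ((Lm - 2 * r + β * τ) - x) / 2 := ⟨_, rfl⟩
    have hη0 : 0 < η := by rw [hη]; linarith
    have h0 := ioc_zero ν _ (x - η) (x + η) (by linarith) (fun y hy e he =>
      low η hη0 ⟨y, e⟩ he (by have := hy.2; simp only; linarith))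
    have h1 := hx η hη0
    exact h1.ne' (measure_mono_null Set.Ioo_subset_Ioc_self h0)
  rw [← htb, ← htβ]
  have e1 : t * Lp + 2 * σ * (t * √β) + t * β * τ = t * (Lp + 2 * r + β * τ) := by rw [hr]; ring
  have e2 : t * Lm - 2 * σ * (t * √β) + t * β * τ = t * (Lm - 2 * r + β * τ) := by rw [hr]; ring
  rw [e1, e2, abs_mul, abs_mul, abs_of_pos ht, ← mul_max_of_nonneg _ _ ht.le]
  refine mul_le_mul_of_nonneg_left ?_ ht.le
  rw [max_comm]
  exact abs_le_max_abs_abs hxl hxu
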